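/- arXiv:math/0306375 — 4 statements merged into one kernel-verified Lean document; each statement's English description precedes it below -/
import Mathlib

section
/- For every d > 0 there exists a constant K(d) > 1 with the following property. Let n ≥ 1 and let z₀, z₁, …, z_n = z₀ be points of 𝔻 \ {0} such that for each i ∈ {0, …, n−1} there is a C¹ path γ_i : [0,1] → 𝔻 \ {0} from z_i to z_{i+1} of hyperbolic length at most d, and such that the concatenation γ of the γ_i admits a continuous lift w : [0,1] → ℂ with exp(w(t)) = γ(t) and |Im w(1) − Im w(0)| ≥ 2π (the chain makes at least one turn around 0). Set Z = {z₀, …, z_{n−1}}. Then every holomorphic covering map φ : 𝔻 → 𝔻 \ Z with φ(0) = 0 satisfies ln|φ′(0)| ≤ ln(max_i |z_i|)/K(d) < 0. -/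
open Complex Metric Set

noncomputable section

/-- `IsCoveringMap` with its meaning in Mathlib of December 2024 (each point lies in the base set
of a `Trivialization` whose fiber is the discrete preimage of that point). -/
def IsCoveringMapOld {E X : Type*} [TopologicalSpace E] [TopologicalSpace X] (f : E → X) : Prop :=
  ∀ x, DiscreteTopology (f ⁻¹' {x}) ∧ ∃ t : Bundle.Trivialization (f ⁻¹' {x}) f, x ∈ t.baseSet

/-- A holomorphic covering map from the unit disc onto `U`. -/
def IsHoloCover (φ : ℂ → ℂ) (U : Set ℂ) : Prop :=
  DifferentiableOn ℂ φ (Metric.ball 0 1) ∧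
  ∃ h : Set.MapsTo φ (Metric.ball 0 1) U,
    IsCoveringMapOld (Set.MapsTo.restrict φ (Metric.ball 0 1) U h)

/-- Hyperbolic length of a `C¹` path `γ : [0,1] → 𝔻`. -/
def hypLength (γ : ℝ → ℂ) : ℝ :=
  ∫ t in (0:ℝ)..1, 2 * ‖deriv γ t‖ / (1 - ‖γ t‖ ^ 2)

open Filter Topology in
lemma aux_deriv_ne_zero_of_injOn {f : ℂ → ℂ} {c : ℂ} {r : ℝ} (hr : 0 < r)
    (hf : DifferentiableOn ℂ f (ball c r)) (hinj : InjOn f (ball c r)) : deriv f c ≠ 0 := by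
  intro h0
  have han : AnalyticOnNhd ℂ f (ball c r) := hf.analyticOnNhd isOpen_ball
  have hopen : ∀ s ⊆ ball c r, IsOpen s → IsOpen (f '' s) := by
    rcases han.is_constant_or_isOpen (convex_ball c r).isPreconnected with ⟨w, hw⟩ | h
    · exfalso
      have h1 : c ∈ ball c r := mem_ball_self hr
      have h2 : c + ((r / 2 : ℝ) : ℂ) ∈ ball c r := by
        rw [mem_ball, dist_eq_norm]
        simp only [add_sub_cancel_left, Complex.norm_real, Real.norm_eq_abs]
        rw [abs_of_pos (by positivity)]; linarith
      have := hinj h1 h2 ((hw _ h1).trans (hw _ h2).symm)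
      have h3 : ((r / 2 : ℝ) : ℂ) = 0 := by simpa using this.symm
      rw [Complex.ofReal_eq_zero] at h3
      linarith
    · exact h
  have hcb : c ∈ ball c r := mem_ball_self hr
  set s := Function.invFunOn f (ball c r) with hs
  have hsl : ∀ x ∈ ball c r, s (f x) = x := fun x hx => hinj.leftInvOn_invFunOn hx
  have hscont : ∀ x ∈ ball c r, ContinuousAt s (f x) := by
    intro x hx
    rw [ContinuousAt, hsl x hx]
    intro O hO
    obtain ⟨O', hO'1, hO'2, hO'3⟩ := _root_.mem_nhds_iff.1 hO
    have : f '' (O' ∩ ball c r) ∈ 𝓝 (f x) :=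
      (hopen _ inter_subset_right (hO'2.inter isOpen_ball)).mem_nhds ⟨x, ⟨hO'3, hx⟩, rfl⟩
    refine Filter.mem_map.2 (mem_of_superset this ?_)
    rintro _ ⟨y, ⟨hy1, hy2⟩, rfl⟩
    change s (f y) ∈ O
    rw [hsl y hy2]
    exact hO'1 hy1
  have hright : ∀ x ∈ ball c r, ∀ᶠ y in 𝓝 (f x), f (s y) = y := by
    intro x hx
    filter_upwards [(hopen _ subset_rfl isOpen_ball).mem_nhds ⟨x, hx, rfl⟩]
    rintro _ ⟨y, hy, rfl⟩
    rw [hsl y hy]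
  have hder : ∀ᶠ z in 𝓝[≠] c, deriv f z ≠ 0 := by
    rcases (han c hcb).deriv.eventually_eq_zero_or_eventually_ne_zero with h | h
    · exfalso
      obtain ⟨ρ, hρ, hb⟩ := Metric.eventually_nhds_iff_ball.1
        (h.and (isOpen_ball.mem_nhds hcb))
      have h2 : c + ((ρ / 2 : ℝ) : ℂ) ∈ ball c ρ := by
        rw [mem_ball, dist_eq_norm]
        simp only [add_sub_cancel_left, Complex.norm_real, Real.norm_eq_abs]
        rw [abs_of_pos (by positivity)]; linarith
      have hconst := (convex_ball c ρ).is_const_of_fderivWithin_eq_zero (𝕜 := ℂ) (f := f)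
        (fun x hx => (hf.differentiableAt (isOpen_ball.mem_nhds (hb x hx).2)).differentiableWithinAt)
        (fun x hx => by
          rw [fderivWithin_of_isOpen isOpen_ball hx]
          ext
          simpa using (hb x hx).1) (mem_ball_self hρ) h2
      have := hinj hcb (hb _ h2).2 hconst
      have h3 : ((ρ / 2 : ℝ) : ℂ) = 0 := by simpa using this.symm
      rw [Complex.ofReal_eq_zero] at h3
      linarith
    · exact h
  have hsan : AnalyticAt ℂ s (f c) := by
    refine analyticAt_of_differentiable_on_punctured_nhds_of_continuousAt ?_ (hscont c hcb)
    rw [eventually_nhdsWithin_iff] at hder ⊢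
    obtain ⟨ρ, hρ, hb⟩ := Metric.eventually_nhds_iff_ball.1
        (hder.and (isOpen_ball.mem_nhds hcb))
    have hsub : ball c ρ ⊆ ball c r := fun x hx => (hb x hx).2
    filter_upwards [(hopen _ hsub isOpen_ball).mem_nhds ⟨c, mem_ball_self hρ, rfl⟩]
    rintro _ ⟨y, hy, rfl⟩ hne
    have hyc : y ≠ c := fun h => hne (by rw [h]; rfl)
    have hd := (hf.differentiableAt (isOpen_ball.mem_nhds (hsub hy))).hasDerivAt
    refine (HasDerivAt.of_local_left_inverse (f := f) (f' := deriv f y) (hscont y (hsub hy)) ?_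
      ((hb y hy).1 hyc) (hright y (hsub hy))).differentiableAt
    rw [hsl y (hsub hy)]; exact hd
  have h1 : HasDerivAt (s ∘ f) (deriv s (f c) * deriv f c) c :=
    hsan.differentiableAt.hasDerivAt.comp c
      (hf.differentiableAt (isOpen_ball.mem_nhds hcb)).hasDerivAt
  have h2 : HasDerivAt (s ∘ f) 1 c :=
    (hasDerivAt_id c).congr_of_eventuallyEq (by
      filter_upwards [isOpen_ball.mem_nhds hcb] with x hx
      exact hsl x hx)
  have := h1.unique h2
  rw [h0, mul_zero] at this
  exact zero_ne_one this

open Filter Topology in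
lemma aux_cover_deriv_ne_zero {φ : ℂ → ℂ} {U : Set ℂ} (h : IsHoloCover φ U) :
    deriv φ 0 ≠ 0 := by
  obtain ⟨hd, hm, hc⟩ := h
  have hcov : IsCoveringMap (Set.MapsTo.restrict φ (Metric.ball 0 1) U hm) := by
    intro x
    obtain ⟨h1, t, ht⟩ := hc x
    exact IsEvenlyCovered.of_trivialization ht
  have hb : (0 : ℂ) ∈ ball (0 : ℂ) 1 := mem_ball_self one_pos
  obtain ⟨V, hV, h0, hinj⟩ := hcov.isLocalHomeomorph.isLocallyInjective ⟨0, hb⟩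
  obtain ⟨W, hW, rfl⟩ := isOpen_induced_iff.1 hV
  obtain ⟨r, hr, hrs⟩ := Metric.isOpen_iff.1 (hW.inter isOpen_ball) 0 ⟨h0, hb⟩
  refine aux_deriv_ne_zero_of_injOn hr (hd.mono fun x hx => (hrs hx).2) ?_
  intro x hx y hy hxy
  have := @hinj ⟨x, (hrs hx).2⟩ (hrs hx).1 ⟨y, (hrs hy).2⟩ (hrs hy).1 (Subtype.ext hxy)
  exact congrArg Subtype.val this

lemma aux_id (a w : ℂ) :
    ‖1 - (starRingEnd ℂ) a * w‖ ^ 2 - ‖w - a‖ ^ 2 = (1 - ‖a‖ ^ 2) * (1 - ‖w‖ ^ 2) := by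
  simp only [← Complex.normSq_eq_norm_sq, Complex.normSq_apply]
  simp
  ring

lemma aux_den {a w : ℂ} (ha : ‖a‖ < 1) (hw : ‖w‖ < 1) : 1 - (starRingEnd ℂ) a * w ≠ 0 := by
  intro h
  have h1 : ‖(starRingEnd ℂ) a * w‖ = 1 := by
    rw [← sub_eq_zero.1 h]; simp
  rw [norm_mul, Complex.norm_conj] at h1
  nlinarith [norm_nonneg a, norm_nonneg w]

lemma aux_mob_lt {a w : ℂ} (ha : ‖a‖ < 1) (hw : ‖w‖ < 1) :
    ‖(w - a) / (1 - (starRingEnd ℂ) a * w)‖ < 1 := by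
  have hd := norm_pos_iff.2 (aux_den ha hw)
  rw [norm_div, div_lt_one hd]
  have := aux_id a w
  have h1 : 0 < (1 - ‖a‖ ^ 2) * (1 - ‖w‖ ^ 2) := by
    apply mul_pos <;> nlinarith [norm_nonneg a, norm_nonneg w]
  exact lt_of_pow_lt_pow_left₀ 2 hd.le (by linarith)

lemma aux_mob_sq {a w : ℂ} (ha : ‖a‖ < 1) (hw : ‖w‖ < 1) :
    1 - ‖(w - a) / (1 - (starRingEnd ℂ) a * w)‖ ^ 2 =
      (1 - ‖a‖ ^ 2) * (1 - ‖w‖ ^ 2) / ‖1 - (starRingEnd ℂ) a * w‖ ^ 2 := by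
  have hd := norm_pos_iff.2 (aux_den ha hw)
  rw [norm_div, ← aux_id, div_pow, sub_div, div_self (by positivity)]

lemma aux_mob_deriv {a w : ℂ} (ha : ‖a‖ < 1) (hw : ‖w‖ < 1) :
    HasDerivAt (fun w => (w - a) / (1 - (starRingEnd ℂ) a * w))
      (((1 - ‖a‖ ^ 2 : ℝ) : ℂ) / (1 - (starRingEnd ℂ) a * w) ^ 2) w := by
  have hd := aux_den ha hw
  have h := ((hasDerivAt_id w).sub_const a).div
    (((hasDerivAt_id w).const_mul ((starRingEnd ℂ) a)).const_sub 1) hd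
  refine h.congr_deriv ?_
  congr 1
  simp only [id]
  push_cast
  rw [← Complex.conj_mul']
  ring

lemma aux_halfplane {q : ℂ → ℂ} (hq : DifferentiableOn ℂ q (ball 0 1))
    (hpos : ∀ z ∈ ball (0 : ℂ) 1, 0 < (q z).re) : ‖deriv q 0‖ ≤ 2 * (q 0).re := by
  have h0 : (0 : ℂ) ∈ ball (0 : ℂ) 1 := mem_ball_self one_pos
  have hne : ∀ z ∈ ball (0 : ℂ) 1, q z + (starRingEnd ℂ) (q 0) ≠ 0 := by
    intro z hz h
    have := congrArg Complex.re h
    simp at this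
    linarith [hpos z hz, hpos 0 h0]
  set p : ℂ → ℂ := fun z => (q z - q 0) / (q z + (starRingEnd ℂ) (q 0)) with hp
  have hpd : DifferentiableOn ℂ p (ball 0 1) :=
    (hq.sub_const _).div (hq.add_const _) hne
  have hp0 : p 0 = 0 := by simp [hp]
  have hmaps : MapsTo p (ball 0 1) (closedBall (p 0) 1) := by
    intro z hz
    rw [hp0, mem_closedBall_zero_iff, norm_div, div_le_one (norm_pos_iff.2 (hne z hz))]
    refine le_of_sq_le_sq ?_ (norm_nonneg _)
    simp only [← Complex.normSq_eq_norm_sq, Complex.normSq_apply]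
    simp
    nlinarith [mul_pos (hpos z hz) (hpos 0 h0)]
  have h1 := Complex.norm_deriv_le_one_of_mapsTo_ball hpd hmaps one_pos
  have hqd := (hq.differentiableAt (isOpen_ball.mem_nhds h0)).hasDerivAt
  have h2 : HasDerivAt p (deriv q 0 / (q 0 + (starRingEnd ℂ) (q 0))) 0 := by
    refine ((hqd.sub_const (q 0)).div (hqd.add_const _) (hne 0 h0)).congr_deriv ?_
    have := hne 0 h0
    field_simp
    ring
  rw [h2.deriv, norm_div, div_le_one (norm_pos_iff.2 (hne 0 h0)), Complex.add_conj] at h1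
  rw [Complex.norm_real, Real.norm_eq_abs, abs_of_pos (by linarith [hpos 0 h0])] at h1
  exact h1

lemma aux_nonvanish {h : ℂ → ℂ} (hh : DifferentiableOn ℂ h (ball 0 1))
    (hlt : ∀ z ∈ ball (0 : ℂ) 1, ‖h z‖ < 1) (hne : ∀ z ∈ ball (0 : ℂ) 1, h z ≠ 0) :
    ‖deriv h 0‖ ≤ 2 * ‖h 0‖ * (- Real.log ‖h 0‖) := by
  have h0 : (0 : ℂ) ∈ ball (0 : ℂ) 1 := mem_ball_self one_pos
  have hdiv : DifferentiableOn ℂ (fun z => deriv h z / h z) (ball 0 1) :=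
    (hh.deriv isOpen_ball).div hh hne
  obtain ⟨P, hP0, hP⟩ := hdiv.isExactOn_ball.with_val_at 0 (Complex.log (h 0))
  have hhd : ∀ z ∈ ball (0 : ℂ) 1, HasDerivAt h (deriv h z) z := fun z hz =>
    (hh.differentiableAt (isOpen_ball.mem_nhds hz)).hasDerivAt
  have hE : ∀ z ∈ ball (0 : ℂ) 1, HasDerivAt (fun z => h z * Complex.exp (- P z)) 0 z := by
    intro z hz
    refine ((hhd z hz).mul (hP z hz).neg.cexp).congr_deriv ?_
    have := hne z hz
    field_simp
    ring
  have hexp : ∀ z ∈ ball (0 : ℂ) 1, h z = Complex.exp (P z) := by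
    intro z hz
    have hconst := (convex_ball (0 : ℂ) 1).is_const_of_fderivWithin_eq_zero (𝕜 := ℂ)
        (f := fun z => h z * Complex.exp (- P z))
        (fun x hx => (hE x hx).differentiableAt.differentiableWithinAt)
        (fun x hx => by
          rw [fderivWithin_of_isOpen isOpen_ball hx]
          ext
          simpa using (hE x hx).deriv) hz h0
    simp only [hP0] at hconst
    rw [Complex.exp_neg, Complex.exp_neg, Complex.exp_log (hne 0 h0),
      mul_inv_cancel₀ (hne 0 h0)] at hconst
    exact (mul_inv_eq_one₀ (Complex.exp_ne_zero _)).1 hconst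
  have hre : ∀ z ∈ ball (0 : ℂ) 1, (P z).re = Real.log ‖h z‖ := by
    intro z hz
    rw [hexp z hz, Complex.norm_exp, Real.log_exp]
  have := aux_halfplane (q := fun z => - P z)
    (fun z hz => (hP z hz).neg.differentiableAt.differentiableWithinAt) (by
      intro z hz
      simp only [Complex.neg_re, hre z hz]
      have := Real.log_neg (norm_pos_iff.2 (hne z hz)) (hlt z hz)
      linarith)
  have hdP : deriv (fun z => - P z) 0 = - (deriv h 0 / h 0) := (hP 0 h0).neg.deriv
  rw [hdP, norm_neg, norm_div, Complex.neg_re, hre 0 h0,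
    div_le_iff₀ (norm_pos_iff.2 (hne 0 h0))] at this
  linarith

lemma aux_sinh {s : ℝ} (hs : 0 ≤ s) : s * Real.cosh (s / 2) ≤ Real.sinh s := by
  have h1 : Real.sinh s = 2 * Real.sinh (s / 2) * Real.cosh (s / 2) := by
    rw [← Real.sinh_two_mul]; congr 1; ring
  have h2 : s / 2 ≤ Real.sinh (s / 2) := Real.self_le_sinh_iff.2 (by linarith)
  have h3 := Real.cosh_pos (s / 2)
  rw [h1]
  nlinarith

lemma aux_contract {f : ℂ → ℂ} (hf : DifferentiableOn ℂ f (ball 0 1))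
    (hlt : ∀ z ∈ ball (0 : ℂ) 1, ‖f z‖ < 1) {b : ℂ} (hb : ‖b‖ < 1)
    (hmiss : ∀ z ∈ ball (0 : ℂ) 1, f z ≠ b) {ζ : ℂ} (hζ : ζ ∈ ball (0 : ℂ) 1) :
    ‖deriv f ζ‖ * (1 - ‖ζ‖ ^ 2) *
      Real.cosh (Real.log ‖(f ζ - b) / (1 - (starRingEnd ℂ) b * f ζ)‖ / 2)
      ≤ 1 - ‖f ζ‖ ^ 2 := by
  have h0 : (0 : ℂ) ∈ ball (0 : ℂ) 1 := mem_ball_self one_pos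
  have hζ' : ‖-ζ‖ < 1 := by simpa using hζ
  set ψ : ℂ → ℂ := fun t => (t - (-ζ)) / (1 - (starRingEnd ℂ) (-ζ) * t) with hψ
  have hψ0 : ψ 0 = ζ := by simp [hψ]
  have hψm : ∀ t ∈ ball (0 : ℂ) 1, ψ t ∈ ball (0 : ℂ) 1 := fun t ht =>
    mem_ball_zero_iff.2 (aux_mob_lt hζ' (mem_ball_zero_iff.1 ht))
  set T : ℂ → ℂ := fun w => (w - b) / (1 - (starRingEnd ℂ) b * w) with hT
  have hfd : ∀ z ∈ ball (0 : ℂ) 1, HasDerivAt f (deriv f z) z := fun z hz =>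
    (hf.differentiableAt (isOpen_ball.mem_nhds hz)).hasDerivAt
  have hcomp : ∀ t ∈ ball (0 : ℂ) 1, HasDerivAt (fun t => T (f (ψ t)))
      (((1 - ‖b‖ ^ 2 : ℝ) : ℂ) / (1 - (starRingEnd ℂ) b * f (ψ t)) ^ 2 *
        (deriv f (ψ t) * (((1 - ‖-ζ‖ ^ 2 : ℝ) : ℂ) / (1 - (starRingEnd ℂ) (-ζ) * t) ^ 2))) t := by
    intro t ht
    have a1 := aux_mob_deriv hζ' (mem_ball_zero_iff.1 ht)
    have a2 := (hfd _ (hψm t ht)).comp t a1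
    exact (aux_mob_deriv hb (hlt _ (hψm t ht))).comp t a2
  have key := aux_nonvanish (h := fun t => T (f (ψ t)))
    (fun t ht => (hcomp t ht).differentiableAt.differentiableWithinAt)
    (fun t ht => aux_mob_lt hb (hlt _ (hψm t ht)))
    (fun t ht => div_ne_zero (sub_ne_zero.2 (hmiss _ (hψm t ht))) (aux_den hb (hlt _ (hψm t ht))))
  rw [(hcomp 0 h0).deriv] at key
  simp only [hψ0] at key
  have hw := hlt ζ hζ
  have hx1 : ‖T (f ζ)‖ < 1 := aux_mob_lt hb hw
  have hx0 : 0 < ‖T (f ζ)‖ := norm_pos_iff.2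
    (div_ne_zero (sub_ne_zero.2 (hmiss _ hζ)) (aux_den hb hw))
  have hsq : 1 - ‖T (f ζ)‖ ^ 2 =
      (1 - ‖b‖ ^ 2) * (1 - ‖f ζ‖ ^ 2) / ‖1 - (starRingEnd ℂ) b * f ζ‖ ^ 2 := aux_mob_sq hb hw
  change _ * Real.cosh (Real.log ‖T (f ζ)‖ / 2) ≤ _
  set x := ‖T (f ζ)‖ with hx
  set N := ‖1 - (starRingEnd ℂ) b * f ζ‖ with hN
  have hNpos : 0 < N := norm_pos_iff.2 (aux_den hb hw)
  have hb2 : 0 < 1 - ‖b‖ ^ 2 := by nlinarith [norm_nonneg b]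
  have hw2 : 0 < 1 - ‖f ζ‖ ^ 2 := by nlinarith [norm_nonneg (f ζ)]
  have hz2 : 0 < 1 - ‖ζ‖ ^ 2 := by
    have := norm_neg ζ ▸ hζ'
    nlinarith [norm_nonneg ζ]
  rw [norm_mul, norm_mul, norm_div, norm_div, norm_pow, norm_pow, ← hN, Complex.norm_real,
    Complex.norm_real, norm_neg, Real.norm_of_nonneg hb2.le, Real.norm_of_nonneg hz2.le] at key
  simp only [mul_zero, sub_zero, norm_one, one_pow, div_one] at key
  set s := - Real.log x with hs
  have hs0 : 0 ≤ s := by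
    have := Real.log_neg hx0 hx1
    linarith
  have hlog : Real.log x / 2 = -(s / 2) := by rw [hs]; ring
  rw [hlog, Real.cosh_neg]
  have hsh : 2 * x * Real.sinh s = 1 - x ^ 2 := by
    rw [Real.sinh_eq, hs, neg_neg, Real.exp_neg, Real.exp_log hx0]
    field_simp
  have hS := aux_sinh hs0
  set D := ‖deriv f ζ‖ * (1 - ‖ζ‖ ^ 2) with hD
  have hD0 : 0 ≤ D := by positivity
  have hspos : 0 < s := by
    have := Real.log_neg hx0 hx1
    linarith
  -- key : (1-b²)/N² * D ≤ 2 x s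
  have e1 : (1 - ‖b‖ ^ 2) / N ^ 2 * (1 - ‖f ζ‖ ^ 2) = 2 * x * Real.sinh s := by
    rw [hsh, hsq]; ring
  set c := (1 - ‖b‖ ^ 2) / N ^ 2 with hc
  have hcpos : 0 < c := by positivity
  have h3 : (D * Real.cosh (s / 2)) * (2 * x * s * c) ≤ (1 - ‖f ζ‖ ^ 2) * (2 * x * s * c) := by
    have t1 : c * D * (2 * x * (s * Real.cosh (s / 2))) ≤
        (2 * x * s) * (2 * x * Real.sinh s) := by
      apply mul_le_mul key _ (by positivity) (by positivity)
      exact mul_le_mul_of_nonneg_left hS (by positivity)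
    rw [← e1] at t1
    linarith
  exact le_of_mul_le_mul_right h3 (by positivity)

open Filter Topology in
lemma aux_localmax {F : ℂ → ℂ} {a : ℂ} (hF : AnalyticAt ℂ F a) (ha : ‖a‖ < 1) (hFa : ‖F a‖ < 1)
    (hmax : IsLocalMax (fun ζ => ‖deriv F ζ‖ * (1 - ‖ζ‖ ^ 2) / (1 - ‖F ζ‖ ^ 2)) a) :
    ‖deriv F a‖ * (1 - ‖a‖ ^ 2) / (1 - ‖F a‖ ^ 2) ≤ 1 := by
  by_contra! hq
  set b := F a with hb
  have ha2 : 0 < 1 - ‖a‖ ^ 2 := by nlinarith [norm_nonneg a]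
  have hb2 : 0 < 1 - ‖b‖ ^ 2 := by nlinarith [norm_nonneg b]
  set H : ℂ → ℂ := fun ζ => deriv F ζ * (1 - (starRingEnd ℂ) a * ζ) ^ 2 /
    (1 - (starRingEnd ℂ) b * F ζ) ^ 2 with hH
  set A : ℂ → ℂ := fun ζ => (ζ - a) / (1 - (starRingEnd ℂ) a * ζ) with hA
  set B : ℂ → ℂ := fun ζ => (F ζ - b) / (1 - (starRingEnd ℂ) b * F ζ) with hB
  set Q : ℂ → ℝ := fun ζ => ‖deriv F ζ‖ * (1 - ‖ζ‖ ^ 2) / (1 - ‖F ζ‖ ^ 2) with hQ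
  set C : ℝ := (1 - ‖b‖ ^ 2) / (1 - ‖a‖ ^ 2) with hC
  have hCpos : 0 < C := div_pos hb2 ha2
  have hA0 : A a = 0 := by simp [hA]
  have hB0 : B a = 0 := by simp [hB, hb]
  have hev : ∀ᶠ ζ in 𝓝 a, ‖ζ‖ < 1 ∧ ‖F ζ‖ < 1 := by
    refine Filter.Eventually.and ?_ ?_
    · exact (continuous_norm.continuousAt (x := a)).eventually_lt_const ha
    · exact hF.continuousAt.norm.eventually_lt_const hFa
  have hQeq : ∀ ζ, ‖ζ‖ < 1 → ‖F ζ‖ < 1 →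
      Q ζ * (1 - ‖B ζ‖ ^ 2) = C * ‖H ζ‖ * (1 - ‖A ζ‖ ^ 2) := by
    intro ζ h1 h2
    have hf2 : 0 < 1 - ‖F ζ‖ ^ 2 := by nlinarith [norm_nonneg (F ζ)]
    have e1 := norm_pos_iff.2 (aux_den ha h1)
    have e2 := norm_pos_iff.2 (aux_den hFa h2)
    simp only [hQ, hA, hB, hH]
    rw [aux_mob_sq ha h1, aux_mob_sq hFa h2, norm_div, norm_mul, norm_pow, norm_pow, hC]
    set N1 := ‖1 - (starRingEnd ℂ) a * ζ‖
    set N2 := ‖1 - (starRingEnd ℂ) b * F ζ‖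
    field_simp
  have hQa : Q a = C * ‖H a‖ := by
    have := hQeq a ha hFa
    rw [hA0, hB0] at this
    simpa using this
  have hHpos : 0 < C * ‖H a‖ := by rw [← hQa]; exact lt_trans one_pos hq
  have hda : HasDerivAt F (deriv F a) a := hF.differentiableAt.hasDerivAt
  have hAd : HasDerivAt A (((1 - ‖a‖ ^ 2 : ℝ) : ℂ) / (1 - (starRingEnd ℂ) a * a) ^ 2) a :=
    aux_mob_deriv ha ha
  have hBd : HasDerivAt B (((1 - ‖b‖ ^ 2 : ℝ) : ℂ) / (1 - (starRingEnd ℂ) b * b) ^ 2 *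
      deriv F a) a := (aux_mob_deriv (w := F a) hFa hFa).comp a hda
  have hconj : ∀ c : ℂ, 1 - (starRingEnd ℂ) c * c = ((1 - ‖c‖ ^ 2 : ℝ) : ℂ) := by
    intro c; rw [Complex.conj_mul']; push_cast; ring
  have hAB : ∀ᶠ ζ in 𝓝[≠] a, ‖A ζ‖ < ‖B ζ‖ := by
    have t1 := hAd.tendsto_slope.norm
    have t2 := hBd.tendsto_slope.norm
    have hlt : ‖((1 - ‖a‖ ^ 2 : ℝ) : ℂ) / (1 - (starRingEnd ℂ) a * a) ^ 2‖ <
        ‖((1 - ‖b‖ ^ 2 : ℝ) : ℂ) / (1 - (starRingEnd ℂ) b * b) ^ 2 * deriv F a‖ := by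
      rw [hconj, hconj, norm_mul, norm_div, norm_div, norm_pow, norm_pow, Complex.norm_real,
        Complex.norm_real, Real.norm_of_nonneg ha2.le, Real.norm_of_nonneg hb2.le]
      rw [lt_div_iff₀ hb2, one_mul] at hq
      have e1 : (1 - ‖a‖ ^ 2) / (1 - ‖a‖ ^ 2) ^ 2 = 1 / (1 - ‖a‖ ^ 2) := by field_simp
      have e2 : (1 - ‖b‖ ^ 2) / (1 - ‖b‖ ^ 2) ^ 2 * ‖deriv F a‖
        = ‖deriv F a‖ / (1 - ‖b‖ ^ 2) := by field_simp
      rw [e1, e2, div_lt_div_iff₀ ha2 hb2]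
      linarith
    filter_upwards [t1.eventually_lt t2 hlt, self_mem_nhdsWithin] with ζ h1 h2
    have h3 : 0 < ‖ζ - a‖ := norm_pos_iff.2 (sub_ne_zero.2 h2)
    rw [slope_def_field, slope_def_field, hA0, hB0, norm_div, norm_div, sub_zero, sub_zero] at h1
    exact (div_lt_div_iff_of_pos_right h3).1 h1
  have hHan : AnalyticAt ℂ H a := by
    refine AnalyticAt.div (hF.deriv.mul ?_) ?_ ?_
    · exact (analyticAt_const.sub (analyticAt_const.mul analyticAt_id)).pow 2
    · exact (analyticAt_const.sub (analyticAt_const.mul hF)).pow 2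
    · exact pow_ne_zero 2 (aux_den hFa hFa)
  have hfreq : ∃ᶠ ζ in 𝓝[≠] a, ‖H a‖ ≤ ‖H ζ‖ := by
    intro hcon
    simp only [not_le] at hcon
    have hloc : IsLocalMax (norm ∘ H) a := by
      rw [eventually_nhdsWithin_iff] at hcon
      filter_upwards [hcon] with ζ h
      by_cases hz : ζ = a
      · rw [hz]
      · exact (h hz).le
    have h1 := Complex.eventually_eq_of_isLocalMax_norm
      (hHan.eventually_analyticAt.mono fun z hz => hz.differentiableAt) hloc
    obtain ⟨ζ, h2, h3⟩ := (hcon.and (h1.filter_mono nhdsWithin_le_nhds)).exists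
    rw [h3] at h2
    exact lt_irrefl _ h2
  obtain ⟨ζ, h1, h4, h5⟩ := (hfreq.and_eventually (hAB.and
    ((hev.and hmax).filter_mono nhdsWithin_le_nhds))).exists
  have e := hQeq ζ h5.1.1 h5.1.2
  have hB1 : ‖B ζ‖ < 1 := aux_mob_lt hFa h5.1.2
  have h6 : Q ζ ≤ Q a := h5.2
  rw [hQa] at h6
  have hB2 : 0 < 1 - ‖B ζ‖ ^ 2 := by nlinarith [norm_nonneg (B ζ)]
  have hA2 : 1 - ‖B ζ‖ ^ 2 < 1 - ‖A ζ‖ ^ 2 := by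
    nlinarith [norm_nonneg (A ζ), norm_nonneg (B ζ)]
  have c1 : Q ζ * (1 - ‖B ζ‖ ^ 2) ≤ C * ‖H a‖ * (1 - ‖B ζ‖ ^ 2) :=
    mul_le_mul_of_nonneg_right h6 hB2.le
  have c2 : C * ‖H a‖ * (1 - ‖B ζ‖ ^ 2) < C * ‖H a‖ * (1 - ‖A ζ‖ ^ 2) :=
    mul_lt_mul_of_pos_left hA2 hHpos
  have c3 : C * ‖H a‖ * (1 - ‖A ζ‖ ^ 2) ≤ C * ‖H ζ‖ * (1 - ‖A ζ‖ ^ 2) :=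
    mul_le_mul_of_nonneg_right (mul_le_mul_of_nonneg_left (by assumption) hCpos.le) (by linarith)
  linarith

open Filter Topology in
lemma aux_ahlfors {f : ℂ → ℂ} (hf : DifferentiableOn ℂ f (ball 0 1)) (hf0 : f 0 = 0)
    {S A : Set ℂ} (hS : IsClosed S) (hA : IsOpen A) (hAS : A ⊆ S) (h0A : (0 : ℂ) ∈ A)
    {R : ℝ} (hSR : ∀ w ∈ S, ‖w‖ < R)
    (hbd : ∀ ζ ∈ ball (0 : ℂ) 1, f ζ ∈ S → f ζ ∉ A →
      ‖deriv f ζ‖ * (1 - ‖ζ‖ ^ 2) * R ≤ R ^ 2 - ‖f ζ‖ ^ 2) :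
    ‖deriv f 0‖ ≤ R := by
  have hR : 0 < R := lt_of_le_of_lt (norm_nonneg _) (hSR 0 (hAS h0A))
  have main : ∀ ρ : ℝ, 0 < ρ → ρ < 1 → ρ * ‖deriv f 0‖ ≤ R := by
    intro ρ hρ hρ1
    set F : ℂ → ℂ := fun ζ => f (ρ * ζ) / R with hF
    have hmem : ∀ ζ ∈ closedBall (0 : ℂ) 1, (ρ : ℂ) * ζ ∈ ball (0 : ℂ) 1 := by
      intro ζ hζ
      rw [mem_closedBall_zero_iff] at hζ
      rw [mem_ball_zero_iff, norm_mul, Complex.norm_real, Real.norm_of_nonneg hρ.le]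
      nlinarith [norm_nonneg ζ]
    have han : ∀ ζ ∈ closedBall (0 : ℂ) 1, AnalyticAt ℂ F ζ := by
      intro ζ hζ
      have h1 : AnalyticAt ℂ f ((ρ : ℂ) * ζ) :=
        hf.analyticAt (isOpen_ball.mem_nhds (hmem ζ hζ))
      have h2 : AnalyticAt ℂ (fun ζ : ℂ => (ρ : ℂ) * ζ) ζ := analyticAt_const.mul analyticAt_id
      exact (h1.comp h2).div_const
    have hder : ∀ ζ ∈ closedBall (0 : ℂ) 1, deriv F ζ = deriv f (ρ * ζ) * ρ / R := by
      intro ζ hζ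
      have h1 := (hf.differentiableAt (isOpen_ball.mem_nhds (hmem ζ hζ))).hasDerivAt
      have h2 : HasDerivAt (fun ζ : ℂ => (ρ : ℂ) * ζ) ρ ζ := by
        simpa using (hasDerivAt_id ζ).const_mul (ρ : ℂ)
      exact ((h1.comp ζ h2).div_const (R : ℂ)).deriv
    have hnormF : ∀ ζ, ‖F ζ‖ = ‖f (ρ * ζ)‖ / R := by
      intro ζ
      simp only [hF]
      rw [norm_div, Complex.norm_real, Real.norm_of_nonneg hR.le]
    set Q : ℂ → ℝ := fun ζ => ‖deriv F ζ‖ * (1 - ‖ζ‖ ^ 2) / (1 - ‖F ζ‖ ^ 2) with hQ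
    set K : Set ℂ := closedBall (0 : ℂ) 1 ∩ (fun ζ : ℂ => f (ρ * ζ)) ⁻¹' S with hK
    have hcontf : ContinuousOn (fun ζ : ℂ => f (ρ * ζ)) (closedBall (0 : ℂ) 1) :=
      hf.continuousOn.comp (by fun_prop) hmem
    have hKc : IsCompact K := by
      refine (isCompact_closedBall (0 : ℂ) 1).of_isClosed_subset ?_ inter_subset_left
      exact hcontf.preimage_isClosed_of_isClosed isClosed_closedBall hS
    have hF1 : ∀ ζ ∈ K, ‖F ζ‖ < 1 := by
      intro ζ hζ
      rw [hnormF, div_lt_one hR]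
      exact hSR _ hζ.2
    have hQc : ContinuousOn Q K := by
      intro ζ hζ
      have h1 := han ζ hζ.1
      have h2 : (1 - ‖F ζ‖ ^ 2) ≠ 0 := by
        have := hF1 ζ hζ
        nlinarith [norm_nonneg (F ζ)]
      refine ContinuousAt.continuousWithinAt ?_
      have c1 := h1.deriv.continuousAt.norm
      have c2 := h1.continuousAt.norm
      exact (c1.mul (continuousAt_const.sub (continuous_norm.continuousAt.pow 2))).div
        (continuousAt_const.sub (c2.pow 2)) h2
    have h0K : (0 : ℂ) ∈ K := by
      refine ⟨by simp, ?_⟩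
      simp only [mem_preimage, mul_zero, hf0]
      exact hAS h0A
    obtain ⟨a, haK, hamax⟩ := hKc.exists_isMaxOn ⟨0, h0K⟩ hQc
    have hQa : Q a ≤ 1 := by
      have ha1 := hF1 a haK
      have ha1' : 0 < 1 - ‖F a‖ ^ 2 := by nlinarith [norm_nonneg (F a)]
      rcases (mem_closedBall_zero_iff.1 haK.1).lt_or_eq with hlt | heq
      · by_cases haA : f (ρ * a) ∈ A
        · apply aux_localmax (han a haK.1) hlt ha1
          have hnh : ball (0 : ℂ) 1 ∩ (fun ζ : ℂ => f (ρ * ζ)) ⁻¹' A ∈ 𝓝 a := by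
            refine IsOpen.mem_nhds ?_ ⟨mem_ball_zero_iff.2 hlt, haA⟩
            exact (hcontf.mono ball_subset_closedBall).isOpen_inter_preimage isOpen_ball hA
          filter_upwards [hnh] with ζ hζ
          exact hamax ⟨ball_subset_closedBall hζ.1, hAS hζ.2⟩
        · have hb := hbd _ (hmem a haK.1) haK.2 haA
          simp only [hQ]
          rw [div_le_one ha1', hder a haK.1, hnormF, norm_div, norm_mul, Complex.norm_real,
            Complex.norm_real, Real.norm_of_nonneg hR.le, Real.norm_of_nonneg hρ.le]
          rw [norm_mul, Complex.norm_real, Real.norm_of_nonneg hρ.le] at hb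
          set D := ‖deriv f (ρ * a)‖ with hD
          have hD0 : 0 ≤ D := norm_nonneg _
          have hρa : ρ * (1 - ‖a‖ ^ 2) ≤ 1 - (ρ * ‖a‖) ^ 2 := by
            have : 0 ≤ (1 - ρ) * (1 + ρ * ‖a‖ ^ 2) := by
              apply mul_nonneg <;> [linarith; positivity]
            nlinarith
          have h5 : D * (ρ * (1 - ‖a‖ ^ 2)) * R ≤ R ^ 2 - ‖f (ρ * a)‖ ^ 2 :=
            le_trans (mul_le_mul_of_nonneg_right (mul_le_mul_of_nonneg_left hρa hD0) hR.le) hb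
          have h6 : D * ρ / R * (1 - ‖a‖ ^ 2) = D * (ρ * (1 - ‖a‖ ^ 2)) * R / R ^ 2 := by
            field_simp
          have h7 : 1 - (‖f (ρ * a)‖ / R) ^ 2 = (R ^ 2 - ‖f (ρ * a)‖ ^ 2) / R ^ 2 := by
            field_simp
          rw [h6, h7]
          exact div_le_div_of_nonneg_right h5 (by positivity)
      · simp only [hQ, heq]
        simp
    have h8 : Q 0 ≤ 1 := le_trans (hamax h0K) hQa
    simp only [hQ, hF] at h8
    have hd0 := hder 0 h0K.1
    simp only [hF] at hd0
    rw [hd0] at h8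
    simp only [mul_zero, hf0, zero_div, norm_zero, ne_eq, OfNat.ofNat_ne_zero, not_false_eq_true,
      zero_pow, sub_zero, mul_one, div_one] at h8
    rw [norm_div, norm_mul, Complex.norm_real, Complex.norm_real, Real.norm_of_nonneg hR.le,
      Real.norm_of_nonneg hρ.le, div_le_one hR] at h8
    linarith
  by_contra! hcon
  have hd : 0 < ‖deriv f 0‖ := lt_trans hR hcon
  obtain ⟨ρ, h1, h2⟩ := exists_between ((div_lt_one hd).2 hcon)
  have := main ρ (lt_trans (div_pos hR hd) h1) h2
  rw [div_lt_iff₀ hd] at h1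
  linarith

/-- Points around which the closed curve `Γ` has a nontrivial logarithm. -/
def auxW (Γ : ℝ → ℂ) (N : ℝ) : Set ℂ :=
  {p | ∃ w : ℝ → ℂ, ContinuousOn w (Icc 0 N) ∧ (∀ t ∈ Icc 0 N, Complex.exp (w t) = Γ t - p) ∧
    w N ≠ w 0}

lemma auxW_move {Γ : ℝ → ℂ} {N : ℝ} (hN : 0 ≤ N) (hΓ : ContinuousOn Γ (Icc 0 N)) (hcl : Γ N = Γ 0)
    {p q : ℂ} (hp : p ∈ auxW Γ N) (hpq : ∀ t ∈ Icc 0 N, ‖q - p‖ < ‖Γ t - p‖) : q ∈ auxW Γ N := by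
  obtain ⟨w, hw, he, hne⟩ := hp
  have hnz : ∀ t ∈ Icc 0 N, Γ t - p ≠ 0 := fun t ht =>
    norm_pos_iff.1 (lt_of_le_of_lt (norm_nonneg _) (hpq t ht))
  have hslit : ∀ t ∈ Icc 0 N, 1 + (p - q) / (Γ t - p) ∈ slitPlane := by
    intro t ht
    apply mem_slitPlane_of_norm_lt_one
    rw [norm_div, div_lt_one (norm_pos_iff.2 (hnz t ht)), norm_sub_rev]
    exact hpq t ht
  refine ⟨fun t => w t + Complex.log (1 + (p - q) / (Γ t - p)), ?_, ?_, ?_⟩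
  · refine hw.add (ContinuousOn.clog ?_ hslit)
    exact continuousOn_const.add (continuousOn_const.div (hΓ.sub continuousOn_const) hnz)
  · intro t ht
    rw [Complex.exp_add, he t ht, Complex.exp_log (slitPlane_ne_zero (hslit t ht))]
    have := hnz t ht
    field_simp
    ring
  · simp only [hcl]
    intro h
    exact hne (add_right_cancel h)

lemma auxW_notMem {Γ : ℝ → ℂ} {N : ℝ} {p : ℂ} (hp : p ∈ auxW Γ N) : p ∉ Γ '' Icc 0 N := by
  rintro ⟨t, ht, rfl⟩
  obtain ⟨w, hw, he, hne⟩ := hp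
  have := he t ht
  rw [sub_self] at this
  exact Complex.exp_ne_zero _ this

lemma auxW_sep {Γ : ℝ → ℂ} {N : ℝ} (hΓ : ContinuousOn Γ (Icc 0 N))
    {p : ℂ} (hp : p ∉ Γ '' Icc 0 N) : ∃ δ > 0, ∀ t ∈ Icc 0 N, δ ≤ ‖Γ t - p‖ := by
  have hc : IsClosed (Γ '' Icc 0 N) := (isCompact_Icc.image_of_continuousOn hΓ).isClosed
  obtain ⟨δ, hδ, hb⟩ := Metric.isOpen_iff.1 hc.isOpen_compl p hp
  refine ⟨δ, hδ, fun t ht => ?_⟩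
  by_contra! h
  exact hb (by rw [mem_ball, dist_eq_norm]; exact h : Γ t ∈ ball p δ) ⟨t, ht, rfl⟩

lemma auxW_open {Γ : ℝ → ℂ} {N : ℝ} (hN : 0 ≤ N) (hΓ : ContinuousOn Γ (Icc 0 N))
    (hcl : Γ N = Γ 0) : IsOpen (auxW Γ N) := by
  rw [Metric.isOpen_iff]
  intro p hp
  obtain ⟨δ, hδ, hb⟩ := auxW_sep hΓ (auxW_notMem hp)
  refine ⟨δ, hδ, fun q hq => auxW_move hN hΓ hcl hp fun t ht => ?_⟩
  rw [mem_ball, dist_eq_norm] at hq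
  exact lt_of_lt_of_le hq (hb t ht)

lemma auxW_closed {Γ : ℝ → ℂ} {N : ℝ} (hN : 0 ≤ N) (hΓ : ContinuousOn Γ (Icc 0 N))
    (hcl : Γ N = Γ 0) : IsClosed (auxW Γ N ∪ Γ '' Icc 0 N) := by
  rw [← isOpen_compl_iff, Metric.isOpen_iff]
  intro p hp
  rw [mem_compl_iff, mem_union, not_or] at hp
  obtain ⟨δ, hδ, hb⟩ := auxW_sep hΓ hp.2
  refine ⟨δ / 2, by positivity, fun q hq => ?_⟩
  rw [mem_ball, dist_eq_norm] at hq
  have hfar : ∀ t ∈ Icc 0 N, δ / 2 < ‖Γ t - q‖ := by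
    intro t ht
    have h1 := hb t ht
    have h2 : ‖Γ t - p‖ ≤ ‖Γ t - q‖ + ‖q - p‖ := norm_sub_le_norm_sub_add_norm_sub _ _ _
    linarith
  rw [mem_compl_iff, mem_union, not_or]
  constructor
  · intro hqA
    refine hp.1 (auxW_move hN hΓ hcl hqA fun t ht => ?_)
    rw [norm_sub_rev]
    exact lt_trans hq (hfar t ht)
  · rintro ⟨t, ht, rfl⟩
    have := hfar t ht
    rw [sub_self, norm_zero] at this
    linarith

lemma auxW_bdd {Γ : ℝ → ℂ} {N : ℝ} (hN : 0 ≤ N) (hΓ : ContinuousOn Γ (Icc 0 N))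
    (hcl : Γ N = Γ 0) {M : ℝ} (hM : ∀ t ∈ Icc 0 N, ‖Γ t‖ ≤ M) {p : ℂ} (hp : p ∈ auxW Γ N) :
    ‖p‖ ≤ M := by
  by_contra! hlt
  obtain ⟨w, hw, he, hne⟩ := hp
  have h0 : (0 : ℝ) ∈ Icc 0 N := ⟨le_rfl, hN⟩
  have hNN : N ∈ Icc 0 N := ⟨hN, le_rfl⟩
  have hppos : 0 < ‖p‖ := lt_of_le_of_lt ((norm_nonneg _).trans (hM 0 h0)) hlt
  have hp0 : p ≠ 0 := norm_pos_iff.1 hppos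
  have hslit : ∀ t ∈ Icc 0 N, 1 + (- Γ t / p) ∈ slitPlane := by
    intro t ht
    apply mem_slitPlane_of_norm_lt_one
    rw [norm_div, norm_neg, div_lt_one hppos]
    exact lt_of_le_of_lt (hM t ht) hlt
  have hcont : ContinuousOn (fun t => w t - Complex.log (1 + (- Γ t / p))) (Icc 0 N) := by
    refine hw.sub (ContinuousOn.clog ?_ hslit)
    exact continuousOn_const.add (hΓ.neg.div_const p)
  have hexp : ∀ t ∈ Icc 0 N, Complex.exp (w t - Complex.log (1 + (- Γ t / p))) = - p := by
    intro t ht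
    have h1 := slitPlane_ne_zero (hslit t ht)
    rw [Complex.exp_sub, he t ht, Complex.exp_log h1, div_eq_iff h1]
    field_simp
    ring
  have := Complex.isCoveringMap_exp.constOn_of_comp isPreconnected_Icc hcont
    (fun a ha a' ha' => Subtype.ext ((hexp a ha).trans (hexp a' ha').symm)) hNN h0
  simp only [hcl] at this
  exact hne (sub_left_injective this)

open MeasureTheory in
lemma aux_len {γ : ℝ → ℂ} {d : ℝ} (hγ : ContDiffOn ℝ 1 γ (Icc 0 1))
    (hlt : ∀ t ∈ Icc (0:ℝ) 1, ‖γ t‖ < 1) (hd : hypLength γ ≤ d) {t : ℝ} (ht : t ∈ Icc (0:ℝ) 1) :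
    Real.exp (-d) ≤ 1 - ‖(γ t - γ 0) / (1 - (starRingEnd ℂ) (γ 0) * γ t)‖ ^ 2 := by
  have h0 : (0 : ℝ) ∈ Icc (0 : ℝ) 1 := ⟨le_rfl, zero_le_one⟩
  set a := γ 0 with ha
  have ha1 : ‖a‖ < 1 := hlt 0 h0
  set p : ℝ → ℂ := fun t => (γ t - a) / (1 - (starRingEnd ℂ) a * γ t) with hp
  have hp1 : ∀ x ∈ Icc (0:ℝ) 1, ‖p x‖ < 1 := fun x hx => aux_mob_lt ha1 (hlt x hx)
  have hp2 : ∀ x ∈ Icc (0:ℝ) 1, 0 < 1 - ‖p x‖ ^ 2 := fun x hx => by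
    nlinarith [hp1 x hx, norm_nonneg (p x)]
  have hg2 : ∀ x ∈ Icc (0:ℝ) 1, 0 < 1 - ‖γ x‖ ^ 2 := fun x hx => by
    nlinarith [hlt x hx, norm_nonneg (γ x)]
  have hder : ∀ x ∈ Ioo (0:ℝ) 1, HasDerivAt γ (deriv γ x) x := fun x hx =>
    ((hγ.differentiableOn (by norm_num)).differentiableAt (Icc_mem_nhds hx.1 hx.2)).hasDerivAt
  set φ : ℝ → ℝ := fun t => 2 * ‖deriv γ t‖ / (1 - ‖γ t‖ ^ 2) with hφ
  have hφint : IntegrableOn φ (Icc 0 1) := by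
    have hc : ContinuousOn (fun t => 2 * ‖derivWithin γ (Icc 0 1) t‖ / (1 - ‖γ t‖ ^ 2))
        (Icc 0 1) := by
      have c1 := hγ.continuousOn_derivWithin (uniqueDiffOn_Icc zero_lt_one) le_rfl
      exact (continuousOn_const.mul c1.norm).div
        (continuousOn_const.sub (hγ.continuousOn.norm.pow 2)) (fun x hx => (hg2 x hx).ne')
    have hi := hc.integrableOn_Icc (μ := volume)
    rw [integrableOn_Icc_iff_integrableOn_Ioo] at hi ⊢
    refine hi.congr_fun (fun x hx => ?_) measurableSet_Ioo
    simp only [hφ]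
    rw [derivWithin_of_mem_nhds (Icc_mem_nhds hx.1 hx.2)]
  have hφ0 : ∀ x ∈ Icc (0:ℝ) 1, 0 ≤ φ x := fun x hx =>
    div_nonneg (by positivity) (hg2 x hx).le
  have hpc : ContinuousOn p (Icc 0 1) :=
    (hγ.continuousOn.sub continuousOn_const).div
      (continuousOn_const.sub (continuousOn_const.mul hγ.continuousOn))
      (fun x hx => aux_den ha1 (hlt x hx))
  have hsub : Icc 0 t ⊆ Icc (0:ℝ) 1 := Icc_subset_Icc le_rfl ht.2
  have key := intervalIntegral.sub_le_integral_of_hasDeriv_right_of_le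
    (g := fun x => - Real.log (1 - ‖p x‖ ^ 2))
    (g' := fun x => - (- (2 * inner ℝ (p x) (((1 - ‖a‖ ^ 2 : ℝ) : ℂ) /
      (1 - (starRingEnd ℂ) a * γ x) ^ 2 * deriv γ x)) / (1 - ‖p x‖ ^ 2)))
    (φ := φ) (a := 0) (b := t) ht.1
    (((continuousOn_const.sub ((hpc.mono hsub).norm.pow 2)).log
      (fun x hx => (hp2 x (hsub hx)).ne')).neg)
    (by
      intro x hx
      have hx' : x ∈ Ioo (0:ℝ) 1 := ⟨hx.1, lt_of_lt_of_le hx.2 ht.2⟩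
      have hpd : HasDerivAt p (((1 - ‖a‖ ^ 2 : ℝ) : ℂ) /
          (1 - (starRingEnd ℂ) a * γ x) ^ 2 * deriv γ x) x :=
        (aux_mob_deriv ha1 (hlt x (Ioo_subset_Icc_self hx'))).comp x (hder x hx')
      exact ((hpd.norm_sq.const_sub 1).log (hp2 x (Ioo_subset_Icc_self hx')).ne').neg.hasDerivWithinAt)
    (hφint.mono_set hsub)
    (by
      intro x hx
      have hx' : x ∈ Icc (0:ℝ) 1 := ⟨hx.1.le, (lt_of_lt_of_le hx.2 ht.2).le⟩
      have e1 := hp2 x hx'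
      have e2 := hg2 x hx'
      have e3 := norm_pos_iff.2 (aux_den ha1 (hlt x hx'))
      have e4 : 0 < 1 - ‖a‖ ^ 2 := hg2 0 h0
      have e5 : 1 - ‖p x‖ ^ 2 = (1 - ‖a‖ ^ 2) * (1 - ‖γ x‖ ^ 2) /
        ‖1 - (starRingEnd ℂ) a * γ x‖ ^ 2 := aux_mob_sq ha1 (hlt x hx')
      set v := ((1 - ‖a‖ ^ 2 : ℝ) : ℂ) / (1 - (starRingEnd ℂ) a * γ x) ^ 2 * deriv γ x with hv
      have e6 : ‖v‖ = (1 - ‖a‖ ^ 2) / ‖1 - (starRingEnd ℂ) a * γ x‖ ^ 2 * ‖deriv γ x‖ := by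
        rw [hv, norm_mul, norm_div, norm_pow, Complex.norm_real, Real.norm_of_nonneg e4.le]
      have e7 : inner ℝ (p x) v ≤ ‖v‖ := by
        refine (real_inner_le_norm _ _).trans ?_
        exact mul_le_of_le_one_left (norm_nonneg _) (hp1 x hx').le
      have e8 : φ x = 2 * ‖v‖ / (1 - ‖p x‖ ^ 2) := by
        simp only [hφ]
        rw [e6, e5]
        field_simp
      rw [e8, neg_div, neg_neg]
      exact div_le_div_of_nonneg_right (by linarith) e1.le)
  have hmono : ∫ y in (0:ℝ)..t, φ y ≤ ∫ y in (0:ℝ)..1, φ y := by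
    refine intervalIntegral.integral_mono_interval le_rfl ht.1 ht.2 ?_ ?_
    · refine (ae_restrict_iff' measurableSet_Ioc).2 (Filter.Eventually.of_forall fun x hx => ?_)
      exact hφ0 x (Ioc_subset_Icc_self hx)
    · rw [intervalIntegrable_iff_integrableOn_Icc_of_le zero_le_one]
      exact hφint
  have hp0 : p 0 = 0 := by simp [hp, ha]
  simp only [hp0, norm_zero] at key
  norm_num at key
  have hfin : - Real.log (1 - ‖p t‖ ^ 2) ≤ d := by
    have : (∫ y in (0:ℝ)..1, φ y) ≤ d := hd
    linarith
  rw [← Real.le_log_iff_exp_le (hp2 t ht)]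
  linarith

lemma aux_small : ∃ K > (0:ℝ), ∀ s, Real.log 2 ≤ s → s / K ≤ Real.log (Real.cosh (s / 2)) := by
  have hl2 : 0 < Real.log 2 := Real.log_pos (by norm_num)
  set κ := Real.log (Real.cosh (Real.log 2 / 2)) with hκ
  have hκpos : 0 < κ := Real.log_pos (Real.one_lt_cosh.2 (by positivity))
  refine ⟨4 + 4 * Real.log 2 / κ, by positivity, fun s hs => ?_⟩
  have hs0 : 0 < s := lt_of_lt_of_le hl2 hs
  by_cases h : 4 * Real.log 2 ≤ s
  · have h1 : s / (4 + 4 * Real.log 2 / κ) ≤ s / 4 := by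
      apply div_le_div_of_nonneg_left hs0.le (by norm_num)
      have : 0 ≤ 4 * Real.log 2 / κ := by positivity
      linarith
    have h2 : s / 2 - Real.log 2 ≤ Real.log (Real.cosh (s / 2)) := by
      rw [Real.le_log_iff_exp_le (Real.cosh_pos _), Real.exp_sub, Real.exp_log (by norm_num),
        Real.cosh_eq]
      have := Real.exp_pos (-(s / 2))
      linarith
    linarith
  · push Not at h
    have h1 : s / (4 + 4 * Real.log 2 / κ) ≤ s / (4 * Real.log 2 / κ) := by
      apply div_le_div_of_nonneg_left hs0.le (by positivity)
      linarith
    have h2 : s / (4 * Real.log 2 / κ) ≤ κ := by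
      rw [div_le_iff₀ (by positivity), mul_div_cancel₀ _ hκpos.ne']
      exact h.le
    have h3 : κ ≤ Real.log (Real.cosh (s / 2)) := by
      apply Real.log_le_log (Real.cosh_pos _)
      rw [Real.cosh_le_cosh, abs_of_pos (by positivity), abs_of_pos (by positivity)]
      linarith
    linarith


set_option maxHeartbeats 4000000 in
/-- For every `d > 0` there is `K(d) > 1` such that: for any cyclic chain
`z₀, …, z_n = z₀` of points of `𝔻 \ {0}` joined by `C¹` paths `γᵢ` in
`𝔻 \ {0}` of hyperbolic length `≤ d`, whose concatenation admits a continuous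
`exp`-lift `w` on `[0, n]` with `|Im w(n) - Im w(0)| ≥ 2π` (at least one turn
around `0`), every holomorphic covering map `φ : 𝔻 → 𝔻 \ {z₀, …, z_{n-1}}`
with `φ 0 = 0` satisfies `ln|φ'(0)| ≤ ln(maxᵢ |zᵢ|)/K(d) < 0`. -/
theorem stmt12 : ∀ d > (0 : ℝ), ∃ K > (1 : ℝ), ∀ (n : ℕ) (hn : 1 ≤ n),
    ∀ z : ℕ → ℂ, z n = z 0 →
    (∀ i ≤ n, z i ∈ Metric.ball (0 : ℂ) 1 \ {0}) →
    ∀ γ : ℕ → ℝ → ℂ,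
    (∀ i < n, ContDiffOn ℝ 1 (γ i) (Set.Icc 0 1) ∧
      (∀ t ∈ Set.Icc (0:ℝ) 1, γ i t ∈ Metric.ball (0 : ℂ) 1 \ {0}) ∧
      γ i 0 = z i ∧ γ i 1 = z (i + 1) ∧ hypLength (γ i) ≤ d) →
    (∃ w : ℝ → ℂ, ContinuousOn w (Set.Icc 0 (n : ℝ)) ∧
      (∀ t ∈ Set.Ico (0:ℝ) (n : ℝ),
        Complex.exp (w t) = γ ⌊t⌋₊ (t - (⌊t⌋₊ : ℝ))) ∧
      Complex.exp (w (n : ℝ)) = z n ∧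
      2 * Real.pi ≤ |(w (n : ℝ)).im - (w 0).im|) →
    ∀ φ : ℂ → ℂ,
      IsHoloCover φ (Metric.ball 0 1 \ {x : ℂ | ∃ i < n, z i = x}) → φ 0 = 0 →
      Real.log ‖deriv φ 0‖ ≤
        Real.log ((Finset.range n).sup'
          (Finset.nonempty_range_iff.mpr (Nat.one_le_iff_ne_zero.mp hn))
          fun i => ‖z i‖) / K ∧
      Real.log ((Finset.range n).sup'
          (Finset.nonempty_range_iff.mpr (Nat.one_le_iff_ne_zero.mp hn))
          fun i => ‖z i‖) / K < 0 := by
  intro d hd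
  obtain ⟨K2, hK2, hsmall⟩ := aux_small
  set x0 := Real.sqrt (1 - Real.exp (-d)) with hx0
  have hed0 : 0 < Real.exp (-d) := Real.exp_pos _
  have hed1 : Real.exp (-d) < 1 := Real.exp_lt_one_iff.2 (by linarith)
  have hx0pos : 0 < x0 := Real.sqrt_pos.2 (by linarith)
  have hx0sq : x0 ^ 2 = 1 - Real.exp (-d) := Real.sq_sqrt (by linarith)
  have hx0lt : x0 < 1 := by nlinarith
  set C0 := Real.cosh (Real.log x0 / 2) with hC0
  have hlx0 : Real.log x0 < 0 := Real.log_neg hx0pos hx0lt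
  have hC01 : 1 < C0 := Real.one_lt_cosh.2 (by
    intro h; linarith)
  set c := C0⁻¹ with hc
  have hcpos : 0 < c := inv_pos.2 (by linarith)
  have hc1 : c < 1 := inv_lt_one_of_one_lt₀ hC01
  have hcC : c * C0 = 1 := inv_mul_cancel₀ (by linarith)
  set θ := (1 - c) * Real.exp (-d) / 8 with hθ
  have hθpos : 0 < θ := by
    have : 0 < 1 - c := by linarith
    positivity
  refine ⟨1 + θ⁻¹ + K2, by have := inv_pos.2 hθpos; linarith, ?_⟩
  intro n hn z hzn hz γ hγ hw φ hφ hφ0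
  obtain ⟨w, hwc, hwe, hwn, hwind⟩ := hw
  set m := ((Finset.range n).sup'
          (Finset.nonempty_range_iff.mpr (Nat.one_le_iff_ne_zero.mp hn))
          fun i => ‖z i‖) with hm
  have hzle : ∀ i < n, ‖z i‖ ≤ m := fun i hi =>
    Finset.le_sup' (fun i => ‖z i‖) (Finset.mem_range.2 hi)
  have hzlt : ∀ i ≤ n, ‖z i‖ < 1 := fun i hi => mem_ball_zero_iff.1 (hz i hi).1
  have hz0 : 0 < ‖z 0‖ := norm_pos_iff.2 (hz 0 (Nat.zero_le _)).2
  have hn0 : 0 < n := hn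
  have hmpos : 0 < m := lt_of_lt_of_le hz0 (hzle 0 hn0)
  have hm1 : m < 1 := by
    rw [hm, Finset.sup'_lt_iff]
    intro i hi
    exact hzlt i (Finset.mem_range.1 hi).le
  have hlm : Real.log m < 0 := Real.log_neg hmpos hm1
  have hKpos : 0 < 1 + θ⁻¹ + K2 := by have := inv_pos.2 hθpos; linarith
  refine ⟨?_, div_neg_of_neg_of_pos hlm hKpos⟩
  have hdne : 0 < ‖deriv φ 0‖ := norm_pos_iff.2 (aux_cover_deriv_ne_zero hφ)
  obtain ⟨hφd, hφm, -⟩ := hφ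
  have h0b : (0 : ℂ) ∈ ball (0 : ℂ) 1 := mem_ball_self one_pos
  have hφlt : ∀ x ∈ ball (0 : ℂ) 1, ‖φ x‖ < 1 := fun x hx => mem_ball_zero_iff.1 (hφm hx).1
  have hφz : ∀ i < n, ∀ x ∈ ball (0 : ℂ) 1, φ x ≠ z i := fun i hi x hx h =>
    (hφm hx).2 ⟨i, hi, h.symm⟩
  by_cases hhalf : m ≤ 1 / 2
  · -- small case
    have h1 := aux_contract hφd hφlt (hzlt 0 (Nat.zero_le _)) (hφz 0 hn0) h0b
    simp only [hφ0, norm_zero, mul_zero, sub_zero, div_one, zero_sub, norm_neg, ne_eq,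
      OfNat.ofNat_ne_zero, not_false_eq_true, zero_pow, mul_one] at h1
    set s := - Real.log ‖z 0‖ with hs
    have e1 : Real.log ‖z 0‖ / 2 = -(s / 2) := by rw [hs]; ring
    rw [e1, Real.cosh_neg] at h1
    have hsm : - Real.log m ≤ s := by
      have := Real.log_le_log hz0 (hzle 0 hn0)
      linarith
    have hm2 : Real.log 2 ≤ - Real.log m := by
      have := Real.log_le_log hmpos hhalf
      rw [one_div, Real.log_inv] at this
      linarith
    have h2 := hsmall s (by linarith)
    have h3 := Real.log_le_log (mul_pos hdne (Real.cosh_pos _)) h1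
    rw [Real.log_mul hdne.ne' (Real.cosh_pos _).ne', Real.log_one] at h3
    have h4 : - Real.log m / (1 + θ⁻¹ + K2) ≤ s / K2 := by
      have := inv_pos.2 hθpos
      apply div_le_div₀ (by linarith) hsm hK2 (by linarith)
    rw [neg_div] at h4
    linarith
  · push Not at hhalf
    -- the curve
    set Γ : ℝ → ℂ := fun t => Complex.exp (w t) with hΓ
    have hN : (0 : ℝ) ≤ n := Nat.cast_nonneg n
    have hΓc : ContinuousOn Γ (Icc 0 (n : ℝ)) := hwc.cexp
    have hΓ0 : Γ 0 = z 0 := by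
      have := hwe 0 ⟨le_rfl, by exact_mod_cast hn0⟩
      simp only [Nat.floor_zero, Nat.cast_zero, sub_zero] at this
      rw [(hγ 0 hn0).2.2.1] at this
      exact this
    have hcl : Γ n = Γ 0 := by rw [hΓ0, ← hzn]; exact hwn
    have hnear : ∀ t ∈ Icc 0 (n : ℝ), ‖Γ t‖ < 1 ∧ ∃ i < n,
        Real.exp (-d) ≤ 1 - ‖(Γ t - z i) / (1 - (starRingEnd ℂ) (z i) * Γ t)‖ ^ 2 := by
      intro t ht
      rcases ht.2.lt_or_eq with hlt | heq
      · have e := hwe t ⟨ht.1, hlt⟩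
        have hi : ⌊t⌋₊ < n := (Nat.floor_lt ht.1).2 hlt
        obtain ⟨g1, g2, g3, g4, g5⟩ := hγ _ hi
        have htm : t - (⌊t⌋₊ : ℝ) ∈ Icc (0:ℝ) 1 := by
          have a1 := Nat.floor_le ht.1
          have a2 := Nat.lt_floor_add_one t
          constructor <;> linarith
        have hl : ∀ s ∈ Icc (0:ℝ) 1, ‖γ ⌊t⌋₊ s‖ < 1 := fun s hs =>
          mem_ball_zero_iff.1 (g2 s hs).1
        have := aux_len g1 hl g5 htm
        rw [g3] at this
        have e' : Γ t = γ ⌊t⌋₊ (t - (⌊t⌋₊ : ℝ)) := e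
        rw [e']
        exact ⟨hl _ htm, _, hi, this⟩
      · rw [heq, hcl, hΓ0]
        refine ⟨hzlt 0 (Nat.zero_le _), 0, hn0, ?_⟩
        simp only [sub_self, zero_div, norm_zero]
        norm_num
        linarith
    set E0 := Real.exp (-d) * (1 - m) / 2 with hE0
    have hE0pos : 0 < E0 := by
      have : 0 < 1 - m := by linarith
      positivity
    have hE0le : E0 < 1 := by
      have : Real.exp (-d) * (1 - m) < 1 * 1 :=
        mul_lt_mul hed1 (by linarith) (by linarith) zero_le_one
      linarith
    have hΓE : ∀ t ∈ Icc 0 (n : ℝ), E0 ≤ 1 - ‖Γ t‖ ^ 2 := by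
      intro t ht
      obtain ⟨h1, i, hi, h2⟩ := hnear t ht
      have hzi := hzlt i hi.le
      have hzm := hzle i hi
      rw [aux_mob_sq hzi h1] at h2
      have hden := norm_pos_iff.2 (aux_den hzi h1)
      rw [le_div_iff₀ (by positivity)] at h2
      have h3 : 1 - ‖z i‖ ≤ ‖1 - (starRingEnd ℂ) (z i) * Γ t‖ := by
        have a1 := norm_sub_norm_le (1 : ℂ) ((starRingEnd ℂ) (z i) * Γ t)
        rw [norm_one, norm_mul, Complex.norm_conj] at a1
        nlinarith [norm_nonneg (z i), norm_nonneg (Γ t)]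
      have h4 : (1 - ‖z i‖) ^ 2 ≤ ‖1 - (starRingEnd ℂ) (z i) * Γ t‖ ^ 2 :=
        pow_le_pow_left₀ (by linarith) h3 2
      have h5 : Real.exp (-d) * (1 - ‖z i‖) ^ 2 ≤ (1 - ‖z i‖ ^ 2) * (1 - ‖Γ t‖ ^ 2) :=
        le_trans (mul_le_mul_of_nonneg_left h4 hed0.le) h2
      have h6 : Real.exp (-d) * (1 - ‖z i‖) ≤ (1 + ‖z i‖) * (1 - ‖Γ t‖ ^ 2) := by
        have hpos : 0 < 1 - ‖z i‖ := by linarith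
        refine le_of_mul_le_mul_right ?_ hpos
        nlinarith
      have h7 : 0 ≤ 1 - ‖Γ t‖ ^ 2 := by nlinarith [norm_nonneg (Γ t)]
      have h8 : (1 + ‖z i‖) * (1 - ‖Γ t‖ ^ 2) ≤ 2 * (1 - ‖Γ t‖ ^ 2) :=
        mul_le_mul_of_nonneg_right (by linarith) h7
      have h9 : Real.exp (-d) * (1 - m) ≤ Real.exp (-d) * (1 - ‖z i‖) :=
        mul_le_mul_of_nonneg_left (by linarith) hed0.le
      rw [hE0]
      linarith
    set R := 1 - (1 - c) * E0 / 2 with hR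
    have hcE : 0 < (1 - c) * E0 := mul_pos (by linarith) hE0pos
    have hcE' : (1 - c) * E0 < E0 := by nlinarith
    have hRpos : 0 < R := by linarith
    have hR1 : R < 1 := by linarith
    have hRsq : 1 - R ^ 2 ≤ (1 - c) * E0 := by
      have : 1 - R = (1 - c) * E0 / 2 := by rw [hR]; ring
      nlinarith
    have hS : ∀ p ∈ auxW Γ n ∪ Γ '' Icc 0 (n : ℝ), ‖p‖ < R := by
      intro p hp
      have hΓM : ∀ t ∈ Icc 0 (n : ℝ), ‖Γ t‖ ≤ Real.sqrt (1 - E0) := fun t ht =>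
        Real.le_sqrt_of_sq_le (by linarith [hΓE t ht])
      have hpM : ‖p‖ ≤ Real.sqrt (1 - E0) := by
        rcases hp with hp | ⟨t, ht, rfl⟩
        · exact auxW_bdd hN hΓc hcl hΓM hp
        · exact hΓM t ht
      refine lt_of_le_of_lt hpM ?_
      rw [Real.sqrt_lt' hRpos]
      linarith
    have h0W : (0 : ℂ) ∈ auxW Γ n := by
      refine ⟨w, hwc, fun t _ => by rw [sub_zero], fun h => ?_⟩
      rw [h, sub_self, abs_zero] at hwind
      linarith [Real.pi_pos]
    have hfin : ‖deriv φ 0‖ ≤ R := by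
      refine aux_ahlfors hφd hφ0 (auxW_closed hN hΓc hcl) (auxW_open hN hΓc hcl)
        subset_union_left h0W hS ?_
      intro ζ hζ hζS hζA
      obtain ⟨t, ht, hte⟩ := hζS.resolve_left hζA
      obtain ⟨-, i, hi, h2⟩ := hnear t ht
      have h3 := hΓE t ht
      rw [hte] at h2 h3
      have h4 := aux_contract hφd hφlt (hzlt i hi.le) (hφz i hi) hζ
      set x := ‖(φ ζ - z i) / (1 - (starRingEnd ℂ) (z i) * φ ζ)‖ with hx
      have hxpos : 0 < x := norm_pos_iff.2
        (div_ne_zero (sub_ne_zero.2 (hφz i hi ζ hζ)) (aux_den (hzlt i hi.le) (hφlt ζ hζ)))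
      have hxx : x ≤ x0 := Real.le_sqrt_of_sq_le (by linarith)
      have hlog := Real.log_le_log hxpos hxx
      have h5 : C0 ≤ Real.cosh (Real.log x / 2) := by
        rw [hC0, Real.cosh_le_cosh, abs_of_neg (by linarith), abs_of_neg (by linarith)]
        linarith
      set D := ‖deriv φ ζ‖ * (1 - ‖ζ‖ ^ 2) with hD
      have hD0 : 0 ≤ D := by
        have : ‖ζ‖ < 1 := mem_ball_zero_iff.1 hζ
        exact mul_nonneg (norm_nonneg _) (by nlinarith [norm_nonneg ζ])
      have h6 : D * C0 ≤ 1 - ‖φ ζ‖ ^ 2 := le_trans (mul_le_mul_of_nonneg_left h5 hD0) h4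
      have h7 : D ≤ c * (1 - ‖φ ζ‖ ^ 2) := by
        have := mul_le_mul_of_nonneg_left h6 hcpos.le
        calc D = c * (D * C0) := by rw [mul_comm D, ← mul_assoc, hcC, one_mul]
          _ ≤ _ := this
      have h8 : D * R ≤ D := mul_le_of_le_one_right hD0 hR1.le
      have h9 : (1 - c) * E0 ≤ (1 - c) * (1 - ‖φ ζ‖ ^ 2) :=
        mul_le_mul_of_nonneg_left h3 (by linarith)
      linarith
    have h1 := Real.log_le_log hdne hfin
    have h2 : Real.log R ≤ R - 1 := Real.log_le_sub_one_of_pos hRpos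
    have h3 : - Real.log m ≤ 2 * (1 - m) := by
      have a1 := Real.log_le_sub_one_of_pos (inv_pos.2 hmpos)
      rw [Real.log_inv] at a1
      have a2 : m⁻¹ - 1 ≤ 2 * (1 - m) := by
        have : m⁻¹ ≤ 2 := by
          rw [inv_le_comm₀ hmpos (by norm_num)]
          linarith
        have e : m⁻¹ - 1 = m⁻¹ * (1 - m) := by field_simp
        rw [e]
        exact mul_le_mul_of_nonneg_right this (by linarith)
      linarith
    have h4 : θ * (- Real.log m) ≤ θ * (2 * (1 - m)) := mul_le_mul_of_nonneg_left h3 hθpos.le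
    have h5 : R - 1 = - (θ * (2 * (1 - m))) := by
      rw [hR, hθ, hE0]; ring
    have h6 : - Real.log m / (1 + θ⁻¹ + K2) ≤ θ * (- Real.log m) := by
      have : - Real.log m / (1 + θ⁻¹ + K2) ≤ - Real.log m / θ⁻¹ := by
        apply div_le_div_of_nonneg_left (by linarith) (inv_pos.2 hθpos) (by linarith)
      rw [div_inv_eq_mul] at this
      linarith
    rw [neg_div] at h6
    linarith
end
end

section
/- For every d > 0 there exists R(d) > 0 such that for every integer q ≥ 3 and every r ∈ [e^{−1}, 1), if q·|ln r| ≥ R(d) then the hyperbolic distance in 𝔻 between r and r·e^{2πi/q} is at most d. -/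
open Complex

noncomputable section

/-- Inverse hyperbolic tangent. -/
def artanh (x : ℝ) : ℝ := (1 / 2) * Real.log ((1 + x) / (1 - x))

/-- Hyperbolic distance on the unit disc. -/
def hypDist (z w : ℂ) : ℝ :=
  2 * artanh (‖z - w‖ / ‖1 - (starRingEnd ℂ) z * w‖)

/-- For every `d > 0` there is `R(d) > 0` such that for all integers `q ≥ 3`
and all `r ∈ [e⁻¹, 1)`, if `q·|ln r| ≥ R(d)` then the hyperbolic distance in
`𝔻` between `r` and `r·e^{2πi/q}` is at most `d`. -/
theorem stmt14 : ∀ d > (0 : ℝ), ∃ R > (0 : ℝ), ∀ q : ℕ, 3 ≤ q → ∀ r : ℝ,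
    Real.exp (-1) ≤ r → r < 1 → R ≤ (q : ℝ) * |Real.log r| →
    hypDist (r : ℂ) ((r : ℂ) * Complex.exp (2 * Real.pi * Complex.I / q)) ≤ d := by
  intro d hd
  have hE : 1 < Real.exp d := Real.one_lt_exp_iff.mpr hd
  have hE1 : 0 < Real.exp d - 1 := by linarith
  have hpi := Real.pi_pos
  refine ⟨2 * Real.pi * ((Real.exp d + 1) / (Real.exp d - 1)), by positivity, ?_⟩
  intro q hq r hr0 hr1 hR
  have hr : 0 < r := lt_of_lt_of_le (Real.exp_pos _) hr0
  have hq0 : (0 : ℝ) < q := by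
    have : 0 < q := by omega
    exact_mod_cast this
  have hlog : Real.log r < 0 := Real.log_neg hr hr1
  rw [abs_of_neg hlog] at hR
  set L := -Real.log r with hL
  have hLpos : 0 < L := by linarith
  have hLr : r * L ≤ 1 - r := by
    have h := Real.log_le_sub_one_of_pos (inv_pos.mpr hr)
    rw [Real.log_inv] at h
    have h2 := mul_le_mul_of_nonneg_left h hr.le
    rw [mul_sub, mul_inv_cancel₀ hr.ne'] at h2
    linarith
  have harg : (2 * Real.pi * Complex.I / q : ℂ) = Complex.I * ((2 * Real.pi / q : ℝ) : ℂ) := by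
    push_cast
    ring
  have hnum : ‖(r : ℂ) - (r : ℂ) * Complex.exp (2 * Real.pi * Complex.I / q)‖
      ≤ r * (2 * Real.pi / q) := by
    have h := Real.norm_exp_I_mul_ofReal_sub_one_le (x := 2 * Real.pi / q)
    rw [Real.norm_of_nonneg (by positivity)] at h
    have e : (r : ℂ) - (r : ℂ) * Complex.exp (2 * Real.pi * Complex.I / q)
        = -((r : ℂ) * (Complex.exp (Complex.I * ((2 * Real.pi / q : ℝ) : ℂ)) - 1)) := by
      rw [harg]
      ring
    rw [e, norm_neg, norm_mul, Complex.norm_of_nonneg hr.le]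
    exact mul_le_mul_of_nonneg_left h hr.le
  have hden : r * L ≤ ‖1 - (starRingEnd ℂ) (r : ℂ) *
      ((r : ℂ) * Complex.exp (2 * Real.pi * Complex.I / q))‖ := by
    have h := norm_sub_norm_le (1 : ℂ) ((starRingEnd ℂ) (r : ℂ) *
      ((r : ℂ) * Complex.exp (2 * Real.pi * Complex.I / q)))
    have hn : ‖Complex.exp (2 * Real.pi * Complex.I / q)‖ = 1 := by
      rw [harg, mul_comm]
      exact Complex.norm_exp_ofReal_mul_I _
    rw [norm_mul, norm_mul, hn, Complex.conj_ofReal, Complex.norm_of_nonneg hr.le, norm_one] at h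
    rw [Complex.conj_ofReal]
    nlinarith
  unfold hypDist artanh
  set N := ‖(r : ℂ) - (r : ℂ) * Complex.exp (2 * Real.pi * Complex.I / q)‖
  set D := ‖1 - (starRingEnd ℂ) (r : ℂ) *
      ((r : ℂ) * Complex.exp (2 * Real.pi * Complex.I / q))‖
  have hD : 0 < D := lt_of_lt_of_le (by positivity) hden
  have ht0 : 0 ≤ N / D := div_nonneg (norm_nonneg _) hD.le
  have ht : N / D ≤ (Real.exp d - 1) / (Real.exp d + 1) := by
    have h1 : N / D ≤ r * (2 * Real.pi / q) / (r * L) :=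
      div_le_div₀ (by positivity) hnum (by positivity) hden
    refine h1.trans ?_
    have e : r * (2 * Real.pi / q) / (r * L) = 2 * Real.pi / (q * L) := by
      field_simp
    rw [e, div_le_div_iff₀ (by positivity) (by positivity)]
    rw [← mul_div_assoc, div_le_iff₀ hE1] at hR
    linarith
  set t := N / D
  rw [le_div_iff₀ (by positivity)] at ht
  have ht1 : 0 < 1 - t := by nlinarith
  have : Real.log ((1 + t) / (1 - t)) ≤ d := by
    rw [Real.log_le_iff_le_exp (by positivity), div_le_iff₀ ht1]
    linarith
  linarith
end
end

section
/- The function u ↦ ln(sinh(u)/u)/u is strictly increasing on (0, +∞). -/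
theorem stmt15_aux : StrictMonoOn (fun u : ℝ => Real.cosh u / Real.sinh u - 1 / u) (Set.Ioi 0) := by
  have hd : ∀ u : ℝ, 0 < u → HasDerivAt (fun u : ℝ => Real.cosh u / Real.sinh u - 1 / u)
      (1 / u ^ 2 - 1 / Real.sinh u ^ 2) u := by
    intro u hu
    have hs : 0 < Real.sinh u := Real.sinh_pos_iff.2 hu
    have h1 := (Real.hasDerivAt_cosh u).div (Real.hasDerivAt_sinh u) hs.ne'
    have h2 := h1.sub (hasDerivAt_inv hu.ne')
    have e : (fun u : ℝ => Real.cosh u / Real.sinh u - 1 / u) =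
        (Real.cosh / Real.sinh - fun x => x⁻¹) := by
      ext x; simp
    rw [e]
    refine h2.congr_deriv ?_
    have := Real.cosh_sq u
    have hc : Real.cosh u * Real.cosh u = Real.sinh u ^ 2 + 1 := by rw [← this]; ring
    rw [hc]
    field_simp
    ring
  apply strictMonoOn_of_deriv_pos (convex_Ioi 0)
  · intro u hu
    exact (hd u hu).continuousAt.continuousWithinAt
  · intro u hu
    rw [interior_Ioi] at hu
    have hu' : 0 < u := hu
    rw [(hd u hu).deriv, sub_pos]
    have : u < Real.sinh u := Real.self_lt_sinh_iff.2 hu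
    gcongr

/-- The function `u ↦ ln(sinh u / u) / u` is strictly increasing on `(0, ∞)`. -/
theorem stmt15 :
    StrictMonoOn (fun u : ℝ => Real.log (Real.sinh u / u) / u) (Set.Ioi 0) := by
  have hG0 : dslope Real.sinh 0 0 = 1 := by simp [dslope_same]
  have hG : ∀ u : ℝ, 0 < u → dslope Real.sinh 0 u = Real.sinh u / u := by
    intro u hu
    rw [dslope_of_ne _ hu.ne', slope_def_field]; simp
  have hd : ∀ u : ℝ, 0 < u → HasDerivAt (fun u => Real.log (dslope Real.sinh 0 u))
      (Real.cosh u / Real.sinh u - 1 / u) u := by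
    intro u hu
    have hs : 0 < Real.sinh u := Real.sinh_pos_iff.2 hu
    have h1 := ((Real.hasDerivAt_sinh u).log hs.ne').sub (Real.hasDerivAt_log hu.ne')
    rw [← one_div] at h1
    refine h1.congr_of_eventuallyEq ?_
    filter_upwards [Ioi_mem_nhds hu] with x hx
    have hx' : 0 < x := hx
    rw [hG x hx, Real.log_div (Real.sinh_pos_iff.2 hx').ne' hx'.ne']
    rfl
  have hc : StrictConvexOn ℝ (Set.Ici 0) (fun u => Real.log (dslope Real.sinh 0 u)) := by
    apply StrictMonoOn.strictConvexOn_of_deriv (convex_Ici 0)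
    · intro u hu
      rcases eq_or_lt_of_le (show (0:ℝ) ≤ u from hu) with h | h
      · subst h
        refine (ContinuousAt.log ?_ ?_).continuousWithinAt
        · exact continuousAt_dslope_same.2 Real.differentiable_sinh.differentiableAt
        · rw [hG0]; exact one_ne_zero
      · exact (hd u h).continuousAt.continuousWithinAt
    · rw [interior_Ici]
      exact stmt15_aux.congr fun u hu => (hd u hu).deriv.symm
  intro x hx y hy hxy
  have hx' : 0 < x := hx
  have hy' : 0 < y := hy
  have := hc.secant_strict_mono (a := 0) (x := x) (y := y) Set.self_mem_Ici hx'.le hy'.le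
    hx'.ne' hy'.ne' hxy
  simpa [hG x hx', hG y hy', hG0] using this
end

section
/- Define a : (0,∞) → ℝ by a(u) = u²/(2π) for u ∈ (0, π] and a(u) = u − π/2 for u ≥ π. Then for every u > 0, the quotient ln(sinh(u)/u)/a(u) lies in the interval [0.75, 1.05]. (Here u/sinh(u) is the conformal radius of 𝔻 \ {e^{−u}} at 0 and a(u) = (1/2π)·area of T(−u) in the quotient ℂ/2πiℤ.) -/
lemma aux_fact (n : ℕ) : 6 ^ n * n.factorial ≤ (2 * n + 1).factorial := by
  induction n with
  | zero => simp
  | succ k ih =>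
    have h : (2 * (k + 1) + 1).factorial = (2*k+3) * ((2*k+2) * (2*k+1).factorial) := by
      rw [show 2 * (k + 1) + 1 = (2*k+1)+1+1 by ring, Nat.factorial_succ, Nat.factorial_succ]
    rw [h, pow_succ, Nat.factorial_succ]
    calc 6 ^ k * 6 * ((k + 1) * k.factorial) = (6 * (k+1)) * (6 ^ k * k.factorial) := by ring
      _ ≤ ((2*k+3) * (2*k+2)) * (2*k+1).factorial := by
        apply Nat.mul_le_mul _ ih
        nlinarith
      _ = _ := by ring

lemma aux_sinh_upper (u : ℝ) (hu : 0 < u) : Real.sinh u ≤ u * Real.exp (u ^ 2 / 6) := by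
  have h1 := Real.hasSum_sinh u
  have h2 : HasSum (fun n : ℕ => u * ((u^2/6)^n / (n.factorial : ℝ))) (u * Real.exp (u ^ 2 / 6)) := by
    apply HasSum.mul_left
    rw [Real.exp_eq_exp_ℝ]
    exact NormedSpace.expSeries_div_hasSum_exp (u^2/6)
  refine hasSum_le (fun n => ?_) h1 h2
  have h3 : (6:ℝ) ^ n * n.factorial ≤ (2 * n + 1).factorial := by exact_mod_cast aux_fact n
  have h4 : u * ((u^2/6)^n / (n.factorial : ℝ)) = u ^ (2*n+1) / (6 ^ n * n.factorial) := by
    rw [div_pow, ← pow_mul, pow_succ]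
    field_simp
  rw [h4]
  gcongr

lemma aux_sinh_lower (u : ℝ) (hu : 0 < u) :
    u * (1 + u^2/6 + u^4/120 + u^6/5040) ≤ Real.sinh u := by
  have h1 := Real.hasSum_sinh u
  have h := sum_le_hasSum (Finset.range 4) (fun n _ => by positivity) h1
  simp [Finset.sum_range_succ, Nat.factorial] at h
  linarith

lemma aux_exp (t : ℝ) (h0 : 0 ≤ t) (h1 : t ≤ 10) :
    Real.exp (t / 8) ≤ 1 + t/6 + t^2/120 + t^3/5040 := by
  obtain ⟨x, rfl⟩ : ∃ x, t = 16 * x := ⟨t/16, by ring⟩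
  have hx0 : 0 ≤ x := by linarith
  have hx1 : x ≤ 5/8 := by linarith
  have hb := Real.exp_bound' hx0 (by linarith) (n := 3) (by norm_num)
  norm_num [Finset.sum_range_succ, Nat.factorial] at hb
  have he : Real.exp (16 * x / 8) = Real.exp x ^ 2 := by
    rw [← Real.exp_nat_mul]; congr 1; push_cast; ring
  rw [he]
  have hq : Real.exp x ≤ 1 + x + x^2/2 + x^3*(2/9) := by linarith
  have hp := pow_le_pow_left₀ (Real.exp_pos x).le hq 2
  refine hp.trans ?_
  have h2 : x^2 ≤ (5/8)^2 := pow_le_pow_left₀ hx0 hx1 2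
  have h3 : x^3 ≤ (5/8)^3 := pow_le_pow_left₀ hx0 hx1 3
  have h4 : x^4 ≤ (5/8)^4 := pow_le_pow_left₀ hx0 hx1 4
  have h5 : x^5 ≤ (5/8)^5 := pow_le_pow_left₀ hx0 hx1 5
  have hr : 0 ≤ 2/3 + 2/15*x - (13/9-4096/5040)*x^2 - (1/4+4/9)*x^3 - 2/9*x^4 - 4/81*x^5 := by
    norm_num at *; linarith
  have := mul_nonneg hx0 hr
  nlinarith

/-- With `a(u) = u²/(2π)` for `u ∈ (0, π]` and `a(u) = u - π/2` for `u ≥ π`,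
the quotient `ln(sinh u / u) / a(u)` lies in `[0.75, 1.05]` for every `u > 0`. -/
theorem stmt16 (u : ℝ) (hu : 0 < u) :
    Real.log (Real.sinh u / u) /
      (if u ≤ Real.pi then u ^ 2 / (2 * Real.pi) else u - Real.pi / 2)
      ∈ Set.Icc (0.75 : ℝ) 1.05 := by
  have hp1 := Real.pi_gt_d2
  have hp2 := Real.pi_lt_d2
  have hs : 0 < Real.sinh u := Real.sinh_pos_iff.2 hu
  have hsu : 0 < Real.sinh u / u := by positivity
  have hu2 : 0 < u^2 := by positivity
  split_ifs with h
  · have ha : 0 < u ^ 2 / (2 * Real.pi) := by positivity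
    have hap : u ^ 2 / (2 * Real.pi) * Real.pi = u^2/2 := by field_simp
    rw [Set.mem_Icc, le_div_iff₀ ha, div_le_iff₀ ha]
    set a := u ^ 2 / (2 * Real.pi)
    constructor
    · have h1 := aux_exp (u^2) (by positivity) (by nlinarith)
      have h2 := aux_sinh_lower u hu
      have h3 : u^2/8 ≤ Real.log (Real.sinh u / u) := by
        rw [Real.le_log_iff_exp_le hsu, le_div_iff₀ hu]
        refine le_trans ?_ h2
        rw [mul_comm]
        apply mul_le_mul_of_nonneg_left _ hu.le
        refine h1.trans (le_of_eq ?_)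
        ring
      nlinarith
    · have h3 : Real.log (Real.sinh u / u) ≤ u^2/6 := by
        rw [Real.log_le_iff_le_exp hsu, div_le_iff₀ hu, mul_comm]
        exact aux_sinh_upper u hu
      nlinarith
  · push Not at h
    have ha : 0 < u - Real.pi / 2 := by linarith
    rw [Set.mem_Icc, le_div_iff₀ ha, div_le_iff₀ ha]
    have hy : Real.exp (-(2*u)) ≤ 1/64 := by
      have h6 : Real.exp (-(2*u)) ≤ Real.exp (-6) := Real.exp_le_exp.2 (by linarith)
      have h2 : (2:ℝ)^6 ≤ Real.exp 1 ^ 6 :=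
        pow_le_pow_left₀ (by norm_num) (by linarith [Real.exp_one_gt_d9]) 6
      rw [← Real.exp_nat_mul] at h2
      norm_num at h2
      rw [Real.exp_neg 6] at h6
      refine h6.trans ?_
      rw [inv_eq_one_div]
      exact one_div_le_one_div_of_le (by norm_num) h2
    have hy0 := Real.exp_pos (-(2*u))
    set y := Real.exp (-(2*u)) with hydef
    have hse : Real.sinh u / u = Real.exp u * (1 - y) / (2*u) := by
      rw [Real.sinh_eq, hydef, mul_sub, ← Real.exp_add]
      rw [show u + -(2*u) = -u by ring]
      field_simp
    have hlog : Real.log (Real.sinh u / u) = u + Real.log (1-y) - Real.log (2*u) := by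
      have : (1-y) ≠ 0 := by linarith
      rw [hse, Real.log_div (by positivity) (by positivity), Real.log_mul (by positivity) this,
        Real.log_exp]
    rw [hlog]
    constructor
    · have h1 : -(1/63) ≤ Real.log (1-y) := by
        have hb := Real.one_sub_inv_le_log_of_pos (x := 1-y) (by linarith)
        have : (1-y)⁻¹ ≤ (63/64:ℝ)⁻¹ := inv_anti₀ (by norm_num) (by linarith)
        norm_num at this
        linarith
      have h2 : Real.log (2*u) ≤ 3 * Real.log 2 + (u/4 - 1) := by
        rw [show 2*u = 2^3 * (u/4) by ring, Real.log_mul (by positivity) (by positivity),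
          Real.log_pow]
        have := Real.log_le_sub_one_of_pos (x := u/4) (by positivity)
        push_cast; linarith
      have := Real.log_two_lt_d9
      linarith
    · have h1 : Real.log (1-y) ≤ 0 := Real.log_nonpos (by linarith) (by linarith)
      have h2 : 7/4 ≤ Real.log (2*u) := by
        have h6 : Real.log 6 ≤ Real.log (2*u) := Real.log_le_log (by norm_num) (by linarith)
        have h7 : (7:ℝ) ≤ Real.log (6^4) := by
          rw [Real.le_log_iff_exp_le (by norm_num)]
          have h2 : Real.exp 1 ^ 7 ≤ 2.7183 ^ 7 :=
            pow_le_pow_left₀ (Real.exp_pos 1).le (by linarith [Real.exp_one_lt_d9]) 7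
          rw [← Real.exp_nat_mul] at h2
          norm_num at h2 ⊢
          linarith
        rw [Real.log_pow] at h7
        push_cast at h7
        linarith
      linarith
end
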